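/- (Prior correlation of observations under the change point PPM) Fix n ≥ 2, μ_0 ∈ ℝ, κ_0 > 0, α_0 > 1, β_0 > 0, and let w be a probability mass function on the set C_n of contiguous partitions of {1,…,n}. For a contiguous partition ρ with blocks S_1,…,S_k define the density on ℝ^n f_ρ(y) = ∏_{j=1}^k t_{|S_j|}(y_{S_j} | 2α_0, μ_0 𝟏_{|S_j|}, (β_0/α_0)(I_{|S_j|} + κ_0^{-1} J_{|S_j|})), where y_{S_j} denotes the subvector of y indexed by S_j, and let f(y) = Σ_{ρ ∈ C_n} w(ρ) f_ρ(y) be the mixture density. Then for all r ≠ s in {1,…,n}, the correlation of the coordinates y_r and y_s under f equals P_w(r and s lie in the same block)/(1 + κ_0); in particular 0 ≤ Corr(y_r, y_s) ≤ 1/(1 + κ_0). -/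

import Mathlib

open MeasureTheory Matrix

/-- The multivariate Student-t density on `ℝ^m` with degrees of freedom `ν`,
location `μ` and positive definite scale matrix `S` (with `|·|` as in the
context). -/
noncomputable def multivariateTDensity (m : ℕ) (ν : ℝ) (μ : Fin m → ℝ)
    (S : Matrix (Fin m) (Fin m) ℝ) (y : Fin m → ℝ) : ℝ :=
  Real.Gamma ((ν + m) / 2) /
      (Real.Gamma (ν / 2) * ν ^ ((m : ℝ) / 2) * Real.pi ^ ((m : ℝ) / 2) *
        Real.sqrt S.det) *
    |1 + (y - μ) ⬝ᵥ (S⁻¹ *ᵥ (y - μ)) / ν| ^ (-(ν + m) / 2)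

/-- A contiguous partition of `{1,…,n}` (represented by `Fin n`, where `i : Fin n`
stands for the point `i+1`): the blocks are the nonempty intervals determined by
boundaries `0 = τ 0 < τ 1 < ⋯ < τ k = n`, block `j` being
`{i : Fin n ∣ τ (j-1) ≤ i < τ j}` (i.e. `{τ_{j-1}+1, …, τ_j}`). -/
def IsContigPartition (n : ℕ) (ρ : Finset (Finset (Fin n))) : Prop :=
  ∃ (k : ℕ) (τ : ℕ → ℕ), 1 ≤ k ∧ τ 0 = 0 ∧ τ k = n ∧ (∀ j < k, τ j < τ (j + 1)) ∧
    ρ = Finset.image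
      (fun j => Finset.univ.filter fun i : Fin n => τ (j - 1) ≤ (i : ℕ) ∧ (i : ℕ) < τ j)
      (Finset.Icc 1 k)


lemma sph_int (m : ℕ) (a : ℝ) (ha : (m:ℝ)/2 < a) :
    Integrable (fun z : Fin m → ℝ => (1 + z ⬝ᵥ z) ^ (-a)) ∧
    ∫ z : Fin m → ℝ, (1 + z ⬝ᵥ z) ^ (-a) =
      Real.pi ^ ((m:ℝ)/2) * Real.Gamma (a - m/2) / Real.Gamma a := by
  have ha0 : 0 < a := lt_of_le_of_lt (by positivity) ha
  have hG : 0 < Real.Gamma a := Real.Gamma_pos_of_pos ha0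
  have hzz : ∀ z : Fin m → ℝ, 0 < 1 + z ⬝ᵥ z := fun z => by
    have : 0 ≤ z ⬝ᵥ z := by
      rw [dotProduct]; exact Finset.sum_nonneg fun i _ => mul_self_nonneg _
    linarith
  let F : (Fin m → ℝ) → ℝ → ℝ := fun z l => l ^ (a - 1) * Real.exp (-((1 + z ⬝ᵥ z) * l))
  have hexp : ∀ (l : ℝ) (z : Fin m → ℝ), F z l =
      (l ^ (a-1) * Real.exp (-l)) * ∏ i, Real.exp (-l * (z i)^2) := by
    intro l z
    simp only [F]
    rw [← Real.exp_sum, mul_assoc, ← Real.exp_add]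
    congr 2
    rw [← Finset.mul_sum, dotProduct]
    simp only [← pow_two]
    ring
  have hin : ∀ l ∈ Set.Ioi (0:ℝ), Integrable (fun z => F z l) := by
    intro l hl
    simp only [hexp]
    refine Integrable.const_mul ?_ _
    exact Integrable.fintype_prod (fun i => integrable_exp_neg_mul_sq hl)
  have hval : ∀ l ∈ Set.Ioi (0:ℝ), ∫ z, F z l =
      Real.pi ^ ((m:ℝ)/2) * (l ^ (a - m/2 - 1) * Real.exp (-l)) := by
    intro l hl
    have hl' : 0 < l := hl
    simp only [hexp]
    rw [integral_const_mul, integral_fintype_prod_volume_eq_pow (fun x : ℝ => Real.exp (-l * x ^ 2)),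
      integral_gaussian]
    rw [Real.sqrt_eq_rpow, ← Real.rpow_natCast, ← Real.rpow_mul (by positivity),
      Real.div_rpow Real.pi_pos.le hl'.le]
    have : l ^ (a - m/2 - 1) = l ^ (a - 1) / l ^ ((m:ℝ)/2) := by
      rw [← Real.rpow_sub hl']; ring_nf
    rw [this]
    simp only [Fintype.card_fin]
    have e : (1/2 * (m:ℝ)) = m/2 := by ring
    rw [e]; ring
  have hgam : IntegrableOn (fun l : ℝ => Real.pi ^ ((m:ℝ)/2) * (l ^ (a - m/2 - 1) * Real.exp (-l))) (Set.Ioi 0) := by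
    refine Integrable.const_mul ?_ _
    have := Real.GammaIntegral_convergent (s := a - m/2) (by linarith)
    refine this.congr (Filter.Eventually.of_forall fun l => ?_)
    simp only; ring
  have hgv : ∫ l in Set.Ioi (0:ℝ), Real.pi ^ ((m:ℝ)/2) * (l ^ (a - m/2 - 1) * Real.exp (-l)) =
      Real.pi ^ ((m:ℝ)/2) * Real.Gamma (a - m/2) := by
    rw [integral_const_mul, Real.Gamma_eq_integral (by linarith)]
    congr 2; ext l; ring
  have hFm : Measurable (Function.uncurry F) := by
    simp only [F, Function.uncurry_def, dotProduct]
    fun_prop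
  have hprod : Integrable (Function.uncurry F) (volume.prod (volume.restrict (Set.Ioi 0))) := by
    rw [integrable_prod_iff' hFm.aestronglyMeasurable]
    constructor
    · exact (ae_restrict_iff' measurableSet_Ioi).2 (Filter.Eventually.of_forall hin)
    · refine hgam.congr ?_
      refine (ae_restrict_iff' measurableSet_Ioi).2 (Filter.Eventually.of_forall fun l hl => ?_)
      simp only
      rw [← hval l hl]
      congr 1; ext z
      have hl' : 0 < l := hl
      simp only [F, Function.uncurry]
      rw [Real.norm_of_nonneg (by positivity)]
  have hin2 : ∀ z, ∫ l in Set.Ioi (0:ℝ), F z l = Real.Gamma a * (1 + z ⬝ᵥ z) ^ (-a) := by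
    intro z
    simp only [F]
    rw [Real.integral_rpow_mul_exp_neg_mul_Ioi ha0 (hzz z), one_div, Real.inv_rpow (hzz z).le,
      Real.rpow_neg (hzz z).le, mul_comm]
  constructor
  · have h := hprod.integral_prod_left
    have h2 := h.const_mul (Real.Gamma a)⁻¹
    refine h2.congr (Filter.Eventually.of_forall fun z => ?_)
    simp only [Function.uncurry]
    rw [hin2]; field_simp
  · have h := integral_integral_swap hprod
    simp only [hin2] at h
    rw [integral_const_mul, setIntegral_congr_fun measurableSet_Ioi hval, hgv] at h
    rw [← h]; field_simp

lemma sph_refl (m : ℕ) (i : Fin m) (G : (Fin m → ℝ) → ℝ)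
    (hG : ∀ z, G (Function.update z i (-z i)) = - G z) : ∫ z, G z = 0 := by
  let e : (Fin m → ℝ) ≃ᵐ (Fin m → ℝ) :=
    MeasurableEquiv.piCongrRight (fun j => if j = i then MeasurableEquiv.neg ℝ else MeasurableEquiv.refl ℝ)
  have he : MeasurePreserving e := by
    refine volume_preserving_pi (f := fun j => ⇑(if j = i then MeasurableEquiv.neg ℝ else MeasurableEquiv.refl ℝ)) fun j => ?_
    split_ifs
    · exact Measure.measurePreserving_neg _
    · exact MeasurePreserving.id _
  have hez : ∀ z, e z = Function.update z i (-z i) := by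
    intro z; ext j
    simp only [e, MeasurableEquiv.piCongrRight, Function.update_apply]
    by_cases h : j = i
    · subst h; simp
    · simp [h]
  have := he.integral_comp' G
  simp only [hez, hG, integral_neg] at this
  linarith

lemma sph_swap (m : ℕ) (i j : Fin m) (a : ℝ) :
    ∫ z : Fin m → ℝ, z i * z i * (1 + z ⬝ᵥ z) ^ (-a) =
    ∫ z : Fin m → ℝ, z j * z j * (1 + z ⬝ᵥ z) ^ (-a) := by
  have he := volume_measurePreserving_piCongrLeft (fun _ : Fin m => ℝ) (Equiv.swap i j)
  rw [← he.integral_comp']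
  congr 1; ext z
  have h : ∀ k, (MeasurableEquiv.piCongrLeft (fun _ : Fin m => ℝ) (Equiv.swap i j)) z k = z (Equiv.swap i j k) := by
    intro k
    conv_lhs => rw [← Equiv.swap_apply_self i j k] 
    rw [MeasurableEquiv.coe_piCongrLeft, Equiv.piCongrLeft_apply_apply]
  simp only [dotProduct, h]
  rw [Equiv.swap_apply_left, Equiv.sum_comp (Equiv.swap i j) (fun k => z k * z k)]

lemma sph_mom (m : ℕ) (ν : ℝ) (hν : 2 < ν) (i j : Fin m) :
    Integrable (fun z : Fin m → ℝ => z i * (1 + z ⬝ᵥ z) ^ (-((ν + m)/2))) ∧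
    ∫ z : Fin m → ℝ, z i * (1 + z ⬝ᵥ z) ^ (-((ν + m)/2)) = 0 ∧
    Integrable (fun z : Fin m → ℝ => z i * z j * (1 + z ⬝ᵥ z) ^ (-((ν + m)/2))) ∧
    ∫ z : Fin m → ℝ, z i * z j * (1 + z ⬝ᵥ z) ^ (-((ν + m)/2)) =
      if i = j then (ν - 2)⁻¹ * (Real.pi ^ ((m:ℝ)/2) * Real.Gamma (ν/2) / Real.Gamma ((ν+m)/2)) else 0 := by
  set a := (ν + m)/2 with ha
  have hm : (0:ℝ) < m := by have := i.pos; exact_mod_cast this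
  have hzz0 : ∀ z : Fin m → ℝ, 0 ≤ z ⬝ᵥ z := fun z => by
      rw [dotProduct]; exact Finset.sum_nonneg fun i _ => mul_self_nonneg _
  have hzz : ∀ z : Fin m → ℝ, 0 < 1 + z ⬝ᵥ z := fun z => by linarith [hzz0 z]
  obtain ⟨h1, h1v⟩ := sph_int m a (by rw [ha]; linarith)
  obtain ⟨h2, h2v⟩ := sph_int m (a-1) (by rw [ha]; linarith)
  have key : ∀ z : Fin m → ℝ, (1 + z ⬝ᵥ z) ^ (-(a-1)) = (1 + z ⬝ᵥ z) * (1 + z ⬝ᵥ z) ^ (-a) := by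
    intro z
    rw [show -(a-1) = 1 + -a by ring, Real.rpow_add (hzz z), Real.rpow_one]
  have hsq : ∀ (z : Fin m → ℝ) k, z k * z k ≤ z ⬝ᵥ z := fun z k =>
    Finset.single_le_sum (f := fun k => z k * z k) (fun i _ => mul_self_nonneg _) (Finset.mem_univ k)
  have hpos : ∀ z : Fin m → ℝ, 0 < (1 + z ⬝ᵥ z) ^ (-a) := fun z => Real.rpow_pos_of_pos (hzz z) _
  have hI1 : ∀ i, Integrable (fun z : Fin m → ℝ => z i * (1 + z ⬝ᵥ z) ^ (-a)) := by
    intro i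
    refine h2.mono' ?_ (Filter.Eventually.of_forall fun z => ?_)
    · refine Measurable.aestronglyMeasurable ?_
      simp only [dotProduct]; fun_prop
    · rw [norm_mul, Real.norm_of_nonneg (hpos z).le, key]
      refine mul_le_mul_of_nonneg_right ?_ (hpos z).le
      rw [Real.norm_eq_abs, abs_le]
      constructor <;> nlinarith [hsq z i, sq_nonneg (z i - 1), sq_nonneg (z i + 1)]
  have hI2 : ∀ i j, Integrable (fun z : Fin m → ℝ => z i * z j * (1 + z ⬝ᵥ z) ^ (-a)) := by
    intro i j
    refine h2.mono' ?_ (Filter.Eventually.of_forall fun z => ?_)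
    · refine Measurable.aestronglyMeasurable ?_
      simp only [dotProduct]; fun_prop
    · rw [norm_mul, Real.norm_of_nonneg (hpos z).le, key]
      refine mul_le_mul_of_nonneg_right ?_ (hpos z).le
      rw [Real.norm_eq_abs, abs_le]
      constructor <;> nlinarith [hsq z i, hsq z j, sq_nonneg (z i - z j), sq_nonneg (z i + z j)]
  have hup : ∀ (i : Fin m) (z : Fin m → ℝ), Function.update z i (-z i) ⬝ᵥ Function.update z i (-z i) = z ⬝ᵥ z := by
    intro i z
    simp only [dotProduct]
    refine Finset.sum_congr rfl fun k _ => ?_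
    by_cases h : k = i
    · subst h; simp
    · simp [h]
  refine ⟨hI1 i, ?_, hI2 i j, ?_⟩
  · refine sph_refl m i _ fun z => ?_
    simp [hup]
  · split_ifs with hij
    · subst hij
      have hsum : ∑ k, ∫ z : Fin m → ℝ, z k * z k * (1 + z ⬝ᵥ z) ^ (-a) =
          (∫ z : Fin m → ℝ, (1 + z ⬝ᵥ z) ^ (-(a-1))) - ∫ z : Fin m → ℝ, (1 + z ⬝ᵥ z) ^ (-a) := by
        rw [← integral_finsetSum _ (fun k _ => hI2 k k), ← integral_sub h2 h1]
        congr 1; ext z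
        rw [key, ← Finset.sum_mul]
        simp only [dotProduct]; ring
      rw [Finset.sum_congr rfl (fun k _ => sph_swap m k i a), h1v, h2v] at hsum
      simp only [Finset.sum_const, Finset.card_univ, Fintype.card_fin, nsmul_eq_mul] at hsum
      have g1 : Real.Gamma a = (a - 1) * Real.Gamma (a-1) := by
        rw [← Real.Gamma_add_one (by rw [ha]; linarith)]; ring_nf
      have g2 : Real.Gamma (ν/2) = (ν/2 - 1) * Real.Gamma (ν/2-1) := by
        rw [← Real.Gamma_add_one (by linarith)]; ring_nf
      have g3 : 0 < Real.Gamma (a-1) := Real.Gamma_pos_of_pos (by rw [ha]; linarith)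
      rw [show a - 1 - m/2 = ν/2-1 by rw [ha]; ring, show a - m/2 = ν/2 by rw [ha]; ring, g1, g2] at hsum
      rw [g1, g2]
      have : a - 1 ≠ 0 := by rw [ha]; linarith
      have : ν - 2 ≠ 0 := by linarith
      apply mul_left_cancel₀ hm.ne'
      rw [hsum]
      have : (m:ℝ) = 2 * a - ν := by rw [ha]; ring
      field_simp
      rw [this]; ring
    · refine sph_refl m i _ fun z => ?_
      rw [hup, Function.update_self, Function.update_of_ne (Ne.symm hij)]; ring

lemma lin_change (m : ℕ) (M : Matrix (Fin m) (Fin m) ℝ) (hM : M.det ≠ 0) (μ : Fin m → ℝ)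
    (G : (Fin m → ℝ) → ℝ) (hG : Measurable G)
    (hI : Integrable (fun z => G (M *ᵥ z + μ))) :
    Integrable G ∧ ∫ y, G y = |M.det| * ∫ z, G (M *ᵥ z + μ) := by
  have hmap := Real.map_matrix_volume_pi_eq_smul_volume_pi hM
  have hT : Measurable (toLin' M) := (LinearMap.continuous_of_finiteDimensional _).measurable
  have hG' : Measurable (fun y => G (y + μ)) := by fun_prop
  have hc : 0 < |M.det⁻¹| := by positivity
  constructor
  · have h1 : Integrable (fun y => G (y + μ)) (Measure.map (toLin' M) volume) := by
      rw [integrable_map_measure hG'.aestronglyMeasurable hT.aemeasurable]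
      exact hI
    rw [hmap, integrable_smul_measure (by simpa using hc) (by simp)] at h1
    have := h1.comp_add_right (-μ)
    simpa using this
  · have h1 := integral_map (μ := volume) hT.aemeasurable (f := fun y => G (y + μ)) hG'.aestronglyMeasurable
    rw [hmap, integral_smul_measure, integral_add_right_eq_self G μ] at h1
    simp only [toLin'_apply] at h1
    rw [← h1, ENNReal.toReal_ofReal hc.le, smul_eq_mul, abs_inv]
    field_simp

lemma t_mom (m : ℕ) (ν : ℝ) (hν : 2 < ν) (μ : Fin m → ℝ) (S : Matrix (Fin m) (Fin m) ℝ)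
    (hS : S.PosDef) :
    (Integrable (multivariateTDensity m ν μ S) ∧ ∫ y, multivariateTDensity m ν μ S y = 1) ∧
    (∀ i, Integrable (fun y => (y i - μ i) * multivariateTDensity m ν μ S y) ∧
      ∫ y, (y i - μ i) * multivariateTDensity m ν μ S y = 0) ∧
    (∀ i j, Integrable (fun y => (y i - μ i) * (y j - μ j) * multivariateTDensity m ν μ S y) ∧
      ∫ y, (y i - μ i) * (y j - μ j) * multivariateTDensity m ν μ S y = ν / (ν - 2) * S i j) := by
  have hν0 : 0 < ν := by linarith
  obtain ⟨B, hB⟩ : ∃ B : Matrix (Fin m) (Fin m) ℝ, ν • S = Bᵀ * B := by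
    open scoped MatrixOrder in
    have h0 : 0 ≤ ν • S := Matrix.nonneg_iff_posSemidef.2 (hS.smul hν0).posSemidef
    obtain ⟨B, hB⟩ := CStarAlgebra.nonneg_iff_eq_star_mul_self.1 h0
    exact ⟨B, by rw [hB, star_eq_conjTranspose, conjTranspose_eq_transpose_of_trivial]⟩
  have hSd : 0 < S.det := hS.det_pos
  have hdet : ν ^ m * S.det = B.det * B.det := by
    have := congrArg det hB
    rwa [det_smul, det_mul, det_transpose, Fintype.card_fin] at this
  have hBd : B.det ≠ 0 := by
    intro h; rw [h] at hdet
    have : 0 < ν ^ m * S.det := by positivity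
    linarith
  have habs : |B.det| = ν ^ ((m:ℝ)/2) * Real.sqrt S.det := by
    rw [← Real.sqrt_mul_self_eq_abs, ← hdet, Real.sqrt_mul (by positivity), Real.sqrt_eq_rpow (ν ^ m),
      ← Real.rpow_natCast, ← Real.rpow_mul hν0.le]
    ring_nf
  have hMd : Bᵀ.det ≠ 0 := by rwa [det_transpose]
  have hSinv : S⁻¹ = ν • (B⁻¹ * Bᵀ⁻¹) := by
    have h1 : S = ν⁻¹ • (Bᵀ * B) := by rw [← hB, smul_smul, inv_mul_cancel₀ hν0.ne', one_smul]
    apply inv_eq_right_inv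
    rw [h1, smul_mul_smul_comm, inv_mul_cancel₀ hν0.ne', one_smul, Matrix.mul_assoc,
      mul_nonsing_inv_cancel_left _ _ hBd.isUnit, mul_nonsing_inv _ hMd.isUnit]
  have hq : ∀ z : Fin m → ℝ, (Bᵀ *ᵥ z) ⬝ᵥ (S⁻¹ *ᵥ (Bᵀ *ᵥ z)) / ν = z ⬝ᵥ z := by
    intro z
    rw [hSinv, smul_mulVec, ← mulVec_mulVec, mulVec_mulVec z, nonsing_inv_mul _ hMd.isUnit, one_mulVec,
      mulVec_transpose, dotProduct_smul, ← dotProduct_mulVec, mulVec_mulVec, mul_nonsing_inv _ hBd.isUnit,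
      one_mulVec, smul_eq_mul]
    field_simp
  set C := Real.Gamma ((ν + m) / 2) /
      (Real.Gamma (ν / 2) * ν ^ ((m : ℝ) / 2) * Real.pi ^ ((m : ℝ) / 2) * Real.sqrt S.det) with hC
  have hCB : |B.det| * C * (Real.pi ^ ((m:ℝ)/2) * Real.Gamma (ν/2) / Real.Gamma ((ν+m)/2)) = 1 := by
    have g1 : 0 < Real.Gamma ((ν+m)/2) := Real.Gamma_pos_of_pos (by positivity)
    have g2 : 0 < Real.Gamma (ν/2) := Real.Gamma_pos_of_pos (by positivity)
    have g3 : 0 < Real.sqrt S.det := Real.sqrt_pos.2 hSd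
    have g4 : 0 < ν ^ ((m : ℝ) / 2) := by positivity
    have g5 : 0 < Real.pi ^ ((m : ℝ) / 2) := by positivity
    rw [habs, hC]
    field_simp
  have hzz : ∀ z : Fin m → ℝ, 0 < 1 + z ⬝ᵥ z := fun z => by
    have : 0 ≤ z ⬝ᵥ z := by
      rw [dotProduct]; exact Finset.sum_nonneg fun i _ => mul_self_nonneg _
    linarith
  have hg : ∀ z, multivariateTDensity m ν μ S (Bᵀ *ᵥ z + μ) = C * (1 + z ⬝ᵥ z) ^ (-((ν+m)/2)) := by
    intro z
    rw [multivariateTDensity, add_sub_cancel_right, hq, abs_of_pos (hzz z), neg_div]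
  have hgm : Measurable (multivariateTDensity m ν μ S) := by
    unfold multivariateTDensity
    simp only [dotProduct, mulVec, Pi.sub_apply]
    fun_prop
  refine ⟨?_, fun i => ?_, fun i j => ?_⟩
  · obtain ⟨h1, h1v⟩ := sph_int m ((ν+m)/2) (by linarith)
    have hl := lin_change m Bᵀ hMd μ _ hgm (by simp only [hg]; exact h1.const_mul _)
    refine ⟨hl.1, ?_⟩
    rw [hl.2]
    simp only [hg]
    rw [integral_const_mul, h1v, det_transpose, show (ν+m)/2 - m/2 = ν/2 by ring, ← mul_assoc, hCB]
  · have hfun : ∀ z : Fin m → ℝ, ((Bᵀ *ᵥ z + μ) i - μ i) * multivariateTDensity m ν μ S (Bᵀ *ᵥ z + μ) =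
      ∑ k, (B k i * C) * (z k * (1 + z ⬝ᵥ z) ^ (-((ν+m)/2))) := by
      intro z
      rw [hg, Pi.add_apply, add_sub_cancel_right, mulVec, dotProduct, Finset.sum_mul]
      refine Finset.sum_congr rfl fun k _ => ?_
      rw [transpose_apply]; ring
    have hint : ∀ k, Integrable (fun z : Fin m → ℝ => (B k i * C) * (z k * (1 + z ⬝ᵥ z) ^ (-((ν+m)/2)))) :=
      fun k => (sph_mom m ν hν k k).1.const_mul _
    have hl := lin_change m Bᵀ hMd μ (fun y => (y i - μ i) * multivariateTDensity m ν μ S y)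
      (by fun_prop) (by simp only [hfun]; exact integrable_finsetSum _ fun k _ => hint k)
    refine ⟨hl.1, ?_⟩
    rw [hl.2]
    simp only [hfun]
    rw [integral_finsetSum _ fun k _ => hint k]
    simp only [integral_const_mul, (sph_mom m ν hν _ i).2.1, mul_zero, Finset.sum_const_zero]
  · have hfun : ∀ z : Fin m → ℝ, ((Bᵀ *ᵥ z + μ) i - μ i) * ((Bᵀ *ᵥ z + μ) j - μ j) * multivariateTDensity m ν μ S (Bᵀ *ᵥ z + μ) =
      ∑ k, ∑ l, (B k i * B l j * C) * (z k * z l * (1 + z ⬝ᵥ z) ^ (-((ν+m)/2))) := by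
      intro z
      rw [hg, Pi.add_apply, add_sub_cancel_right, Pi.add_apply, add_sub_cancel_right, mulVec, dotProduct,
        mulVec, dotProduct, Finset.sum_mul_sum, Finset.sum_mul]
      refine Finset.sum_congr rfl fun k _ => ?_
      rw [Finset.sum_mul]
      refine Finset.sum_congr rfl fun l _ => ?_
      rw [transpose_apply, transpose_apply]; ring
    have hint : ∀ k l, Integrable (fun z : Fin m → ℝ => (B k i * B l j * C) * (z k * z l * (1 + z ⬝ᵥ z) ^ (-((ν+m)/2)))) :=
      fun k l => (sph_mom m ν hν k l).2.2.1.const_mul _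
    have hint2 : ∀ k, Integrable (fun z : Fin m → ℝ => ∑ l, (B k i * B l j * C) * (z k * z l * (1 + z ⬝ᵥ z) ^ (-((ν+m)/2)))) :=
      fun k => integrable_finsetSum _ fun l _ => hint k l
    have hl := lin_change m Bᵀ hMd μ (fun y => (y i - μ i) * (y j - μ j) * multivariateTDensity m ν μ S y)
      (by fun_prop) (by simp only [hfun]; exact integrable_finsetSum _ fun k _ => hint2 k)
    refine ⟨hl.1, ?_⟩
    rw [hl.2]
    simp only [hfun]
    rw [integral_finsetSum _ fun k _ => hint2 k]
    have hSij : ν * S i j = ∑ k, B k i * B k j := by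
      have := congrFun (congrFun hB i) j
      rw [mul_apply] at this
      simpa using this
    have : ∀ k, ∫ z : Fin m → ℝ, ∑ l, (B k i * B l j * C) * (z k * z l * (1 + z ⬝ᵥ z) ^ (-((ν+m)/2)))
        = (B k i * B k j) * (C * ((ν - 2)⁻¹ * (Real.pi ^ ((m:ℝ)/2) * Real.Gamma (ν/2) / Real.Gamma ((ν+m)/2)))) := by
      intro k
      rw [integral_finsetSum _ fun l _ => hint k l]
      simp only [integral_const_mul, (sph_mom m ν hν k _).2.2.2]
      simp only [mul_ite, mul_zero, Finset.sum_ite_eq, Finset.mem_univ, if_true]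
      ring
    simp only [this]
    rw [← Finset.sum_mul, ← hSij, det_transpose]
    linear_combination (ν - 2)⁻¹ * ν * S i j * hCB

lemma contig_part (n : ℕ) (ρ : Finset (Finset (Fin n))) (h : IsContigPartition n ρ) (i : Fin n) :
    ∃ S ∈ ρ, i ∈ S ∧ ∀ T ∈ ρ, i ∈ T → T = S := by
  obtain ⟨k, τ, hk, h0, hn, hlt, rfl⟩ := h
  have hmono : ∀ b, b ≤ k → ∀ a, a ≤ b → τ a ≤ τ b := by
    intro b
    induction b with
    | zero => intro _ a ha; rw [Nat.le_zero.1 ha]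
    | succ b ih =>
      intro hb a ha
      rcases Nat.lt_or_ge a (b+1) with h | h
      · exact (ih (by omega) a (by omega)).trans (hlt b (by omega)).le
      · rw [le_antisymm ha h]
  have hex : ∃ j, (i:ℕ) < τ j := ⟨k, by rw [hn]; exact i.2⟩
  classical
  let j := Nat.find hex
  have hj : (i:ℕ) < τ j := Nat.find_spec hex
  have hjk : j ≤ k := Nat.find_min' hex (by rw [hn]; exact i.2)
  have hj0 : 1 ≤ j := by
    by_contra hc
    have : j = 0 := by omega
    rw [this, h0] at hj; omega
  have hj1 : τ (j-1) ≤ i := by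
    have := Nat.find_min hex (m := j - 1) (by change j - 1 < j; omega)
    omega
  refine ⟨_, Finset.mem_image_of_mem _ (Finset.mem_Icc.2 ⟨hj0, hjk⟩), ?_, ?_⟩
  · simp [hj, hj1]
  · intro T hT hiT
    obtain ⟨l, hl, rfl⟩ := Finset.mem_image.1 hT
    rw [Finset.mem_Icc] at hl
    simp only [Finset.mem_filter, Finset.mem_univ, true_and] at hiT
    have : l = j := by
      rcases lt_trichotomy l j with h | h | h
      · have := hmono (j-1) (by omega) l (by omega); omega
      · exact h
      · have := hmono (l-1) (by omega) j (by omega); omega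
    rw [this]

lemma curry_mp {ι : Type*} [Fintype ι] (κ : ι → Type*) [∀ i, Fintype (κ i)] :
    MeasurePreserving (MeasurableEquiv.piCurry (fun (i : ι) (_ : κ i) => ℝ)) := by
  refine MeasurePreserving.symm (MeasurableEquiv.piCurry (fun (i : ι) (_ : κ i) => ℝ)).symm ⟨MeasurableEquiv.measurable _, ?_⟩
  symm
  refine Measure.pi_eq fun s hs => ?_
  rw [MeasurableEquiv.map_apply]
  have : (MeasurableEquiv.piCurry (fun (i : ι) (_ : κ i) => ℝ)).symm ⁻¹' (Set.univ.pi s) =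
      Set.univ.pi fun i => Set.univ.pi fun j => s ⟨i, j⟩ := by
    ext x
    simp only [Set.mem_preimage, Set.mem_univ_pi, Sigma.forall]
    rfl
  rw [this, volume_pi_pi, Fintype.prod_sigma]
  refine Finset.prod_congr rfl fun i _ => ?_
  rw [volume_pi_pi]

lemma block_int (n : ℕ) (ρ : Finset (Finset (Fin n)))
    (hρ : ∀ i, ∃ S ∈ ρ, i ∈ S ∧ ∀ T ∈ ρ, i ∈ T → T = S)
    (G : ∀ S : Finset (Fin n), (Fin S.card → ℝ) → ℝ) (hG : ∀ S ∈ ρ, Integrable (G S)) :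
    Integrable (fun y : Fin n → ℝ => ∏ S ∈ ρ, G S (fun i => y (S.orderEmbOfFin rfl i))) ∧
    ∫ y : Fin n → ℝ, ∏ S ∈ ρ, G S (fun i => y (S.orderEmbOfFin rfl i)) = ∏ S ∈ ρ, ∫ v, G S v := by
  have hbij : Function.Bijective (fun p : (Σ S : ρ, Fin S.1.card) => p.1.1.orderEmbOfFin rfl p.2) := by
    constructor
    · rintro ⟨⟨S, hS⟩, a⟩ ⟨⟨T, hT⟩, b⟩ h
      simp only at h
      have h1 : S.orderEmbOfFin rfl a ∈ S := Finset.orderEmbOfFin_mem _ _ _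
      have h2 : S.orderEmbOfFin rfl a ∈ T := by rw [h]; exact Finset.orderEmbOfFin_mem _ _ _
      obtain ⟨U, _, _, hU⟩ := hρ (S.orderEmbOfFin rfl a)
      have : S = T := (hU S hS h1).trans (hU T hT h2).symm
      subst this
      have := (S.orderEmbOfFin rfl).injective h
      rw [this]
    · intro i
      obtain ⟨S, hS, hi, _⟩ := hρ i
      have : i ∈ Set.range (S.orderEmbOfFin rfl) := by rw [Finset.range_orderEmbOfFin]; exact hi
      obtain ⟨a, ha⟩ := this
      exact ⟨⟨⟨S, hS⟩, a⟩, ha⟩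
  let e := Equiv.ofBijective _ hbij
  let Φ : (Fin n → ℝ) ≃ᵐ (∀ S : ρ, Fin S.1.card → ℝ) :=
    (MeasurableEquiv.piCongrLeft (fun _ => ℝ) e).symm.trans
      (MeasurableEquiv.piCurry (fun (S : ρ) (_ : Fin S.1.card) => ℝ))
  have hΦ : MeasurePreserving Φ :=
    ((volume_measurePreserving_piCongrLeft (fun _ => ℝ) e).symm _).trans (curry_mp _)
  have hΦv : ∀ y S, Φ y S = fun i => y (S.1.orderEmbOfFin rfl i) := by
    intro y S; rfl
  have hfun : (fun y : Fin n → ℝ => ∏ S ∈ ρ, G S (fun i => y (S.orderEmbOfFin rfl i))) =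
      (fun x : (∀ S : ρ, Fin S.1.card → ℝ) => ∏ S, G S.1 (x S)) ∘ Φ := by
    ext y
    simp only [Function.comp, hΦv]
    rw [← Finset.prod_coe_sort]
  rw [hfun]
  constructor
  · rw [hΦ.integrable_comp_emb Φ.measurableEmbedding]
    exact Integrable.fintype_prod_dep (f := fun (S : ρ) => G S.1) (μ := fun _ => volume) (fun S => hG S.1 S.2)
  · change ∫ y, (fun x : (∀ S : ρ, Fin S.1.card → ℝ) => ∏ S, G S.1 (x S)) (Φ y) = _
    rw [hΦ.integral_comp' (fun x : (∀ S : ρ, Fin S.1.card → ℝ) => ∏ S, G S.1 (x S)),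
      integral_fintype_prod_volume_eq_prod (fun (S : ρ) => G S.1)]
    exact Finset.prod_coe_sort ρ (fun S => ∫ v, G S v)

open Classical in
lemma rho_mom (n : ℕ) (μ0 κ0 α0 β0 : ℝ) (hκ : 0 < κ0) (hα : 1 < α0) (hβ : 0 < β0)
    (ρ : Finset (Finset (Fin n)))
    (hρ : ∀ i, ∃ S ∈ ρ, i ∈ S ∧ ∀ T ∈ ρ, i ∈ T → T = S)
    (F : (Fin n → ℝ) → ℝ) (hF : F = fun y => ∏ S ∈ ρ, multivariateTDensity S.card (2 * α0) (fun _ => μ0)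
          ((β0 / α0) • ((1 : Matrix (Fin S.card) (Fin S.card) ℝ) +
            κ0⁻¹ • Matrix.of fun _ _ => (1 : ℝ)))
          (fun i => y (S.orderEmbOfFin rfl i))) :
    (Integrable F ∧ ∫ y, F y = 1) ∧
    (∀ i, Integrable (fun y => (y i - μ0) * F y) ∧ ∫ y, (y i - μ0) * F y = 0) ∧
    (∀ i j, Integrable (fun y => (y i - μ0) * (y j - μ0) * F y) ∧
      ∫ y, (y i - μ0) * (y j - μ0) * F y =
        if ∃ S ∈ ρ, i ∈ S ∧ j ∈ S then β0 / (α0 - 1) * ((if i = j then 1 else 0) + κ0⁻¹) else 0) := by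
  have hpd : ∀ m : ℕ, ((β0 / α0) • ((1 : Matrix (Fin m) (Fin m) ℝ) +
            κ0⁻¹ • Matrix.of fun _ _ => (1 : ℝ))).PosDef := by
    intro m
    have h1 : (1 : Matrix (Fin m) (Fin m) ℝ).PosDef := Matrix.PosDef.one
    have h2 : (Matrix.of fun _ _ => (1 : ℝ) : Matrix (Fin m) (Fin m) ℝ).PosSemidef := by
      have := Matrix.posSemidef_vecMulVec_self_star (fun _ : Fin m => (1:ℝ))
      convert this using 1
      ext i j; simp [vecMulVec]
    have hb : 0 < β0 / α0 := by positivity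
    exact (h1.add_posSemidef (h2.smul (by positivity : 0 ≤ κ0⁻¹))).smul hb
  let g : ∀ S : Finset (Fin n), (Fin S.card → ℝ) → ℝ := fun S =>
    multivariateTDensity S.card (2 * α0) (fun _ => μ0)
          ((β0 / α0) • ((1 : Matrix (Fin S.card) (Fin S.card) ℝ) +
            κ0⁻¹ • Matrix.of fun _ _ => (1 : ℝ)))
  have hF' : ∀ y, F y = ∏ S ∈ ρ, g S (fun i => y (S.orderEmbOfFin rfl i)) := by
    intro y; rw [hF]
  have ht := fun S : Finset (Fin n) => t_mom S.card (2*α0) (by linarith) (fun _ => μ0) _ (hpd S.card)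
  let c : Fin n → ∀ S : Finset (Fin n), (Fin S.card → ℝ) → ℝ := fun i S v =>
    if h : i ∈ S then v ((S.orderIsoOfFin rfl).symm ⟨i, h⟩) - μ0 else 1
  have hcp : ∀ i (y : Fin n → ℝ), y i - μ0 = ∏ S ∈ ρ, c i S (fun k => y (S.orderEmbOfFin rfl k)) := by
    intro i y
    obtain ⟨S, hS, hi, hu⟩ := hρ i
    rw [Finset.prod_eq_single_of_mem S hS]
    · simp only [c, hi, dif_pos]
      rw [← Finset.coe_orderIsoOfFin_apply, OrderIso.apply_symm_apply]
    · intro T hT hne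
      have : i ∉ T := fun h => hne (hu T hT h)
      simp [c, this]
  have hc1 : ∀ i S, Integrable (fun v => c i S v * g S v) ∧
      ∫ v, c i S v * g S v = if i ∈ S then 0 else 1 := by
    intro i S
    by_cases hi : i ∈ S
    · simp only [c, hi, dif_pos, if_true]
      exact (ht S).2.1 _
    · simp only [c, hi, dif_neg, not_false_eq_true, one_mul, if_false]
      exact (ht S).1
  have hc2 : ∀ i j S, Integrable (fun v => c i S v * c j S v * g S v) ∧
      ∫ v, c i S v * c j S v * g S v = if i ∈ S then (if j ∈ S then
        β0 / (α0 - 1) * ((if i = j then 1 else 0) + κ0⁻¹) else 0) else (if j ∈ S then 0 else 1) := by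
    intro i j S
    by_cases hi : i ∈ S
    · by_cases hj : j ∈ S
      · simp only [c, hi, hj, dif_pos, if_true]
        have := (ht S).2.2 ((S.orderIsoOfFin rfl).symm ⟨i, hi⟩) ((S.orderIsoOfFin rfl).symm ⟨j, hj⟩)
        refine ⟨this.1, this.2.trans ?_⟩
        simp only [Matrix.smul_apply, Matrix.add_apply, Matrix.one_apply, of_apply, smul_eq_mul, mul_one,
          EmbeddingLike.apply_eq_iff_eq, Subtype.mk.injEq]
        have : α0 - 1 ≠ 0 := by linarith
        have : 2 * α0 - 2 ≠ 0 := by linarith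
        have : α0 ≠ 0 := by linarith
        rw [show 2 * α0 - 2 = 2 * (α0 - 1) by ring]
        field_simp
      · have := hc1 i S
        simp only [hi, hj, if_true, if_false] at this ⊢
        have h1 : ∀ v, c j S v = 1 := fun v => by simp [c, hj]
        simpa only [h1, mul_one] using this
    · have h1 : ∀ v, c i S v = 1 := fun v => by simp [c, hi]
      have := hc1 j S
      simpa only [h1, one_mul, hi, if_false] using this
  refine ⟨?_, fun i => ?_, fun i j => ?_⟩
  · have := block_int n ρ hρ g (fun S _ => (ht S).1.1)
    simp only [← hF'] at this
    refine ⟨this.1, this.2.trans ?_⟩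
    exact Finset.prod_eq_one fun S _ => (ht S).1.2
  · have := block_int n ρ hρ (fun S v => c i S v * g S v) (fun S _ => (hc1 i S).1)
    simp only [Finset.prod_mul_distrib, ← hF', ← hcp] at this
    refine ⟨this.1, this.2.trans ?_⟩
    obtain ⟨S, hS, hi, hu⟩ := hρ i
    refine Finset.prod_eq_zero hS ?_
    rw [(hc1 i S).2, if_pos hi]
  · have := block_int n ρ hρ (fun S v => c i S v * c j S v * g S v) (fun S _ => (hc2 i j S).1)
    simp only [Finset.prod_mul_distrib, ← hF', ← hcp] at this
    refine ⟨this.1, this.2.trans ?_⟩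
    obtain ⟨S, hS, hi, hu⟩ := hρ i
    obtain ⟨T, hT, hj, hv⟩ := hρ j
    by_cases hST : S = T
    · subst hST
      rw [if_pos ⟨S, hS, hi, hj⟩, Finset.prod_eq_single_of_mem S hS]
      · rw [(hc2 i j S).2, if_pos hi, if_pos hj]
      · intro U hU hne
        rw [(hc2 i j U).2, if_neg (fun h => hne (hu U hU h)), if_neg (fun h => hne (hv U hU h))]
    · rw [if_neg]
      · refine Finset.prod_eq_zero hS ?_
        rw [(hc2 i j S).2, if_pos hi, if_neg (fun h => hST (hv S hS h))]
      · rintro ⟨U, hU, h1, h2⟩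
        exact hST ((hu U hU h1).symm.trans (hv U hU h2))

theorem prior_correlation_change_point_PPM (n : ℕ) (hn : 2 ≤ n)
    (μ0 κ0 α0 β0 : ℝ) (hκ : 0 < κ0) (hα : 1 < α0) (hβ : 0 < β0)
    (w : Finset (Finset (Fin n)) → ℝ)
    (hw0 : ∀ ρ, 0 ≤ w ρ)
    (hw1 : ∑ᶠ ρ ∈ {ρ | IsContigPartition n ρ}, w ρ = 1)
    (hwsupp : ∀ ρ, ¬IsContigPartition n ρ → w ρ = 0)
    (r s : Fin n) (hrs : r ≠ s) :
    let f : (Fin n → ℝ) → ℝ := fun y =>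
      ∑ᶠ ρ ∈ {ρ | IsContigPartition n ρ}, w ρ *
        ∏ S ∈ ρ, multivariateTDensity S.card (2 * α0) (fun _ => μ0)
          ((β0 / α0) • ((1 : Matrix (Fin S.card) (Fin S.card) ℝ) +
            κ0⁻¹ • Matrix.of fun _ _ => (1 : ℝ)))
          (fun i => y (S.orderEmbOfFin rfl i))
    let mean : Fin n → ℝ := fun i => ∫ y : Fin n → ℝ, y i * f y
    let cov : Fin n → Fin n → ℝ := fun i j =>
      ∫ y : Fin n → ℝ, (y i - mean i) * (y j - mean j) * f y
    cov r s / Real.sqrt (cov r r * cov s s) =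
        (∑ᶠ ρ ∈ {ρ | IsContigPartition n ρ ∧ ∃ S ∈ ρ, r ∈ S ∧ s ∈ S}, w ρ) / (1 + κ0) ∧
      0 ≤ cov r s / Real.sqrt (cov r r * cov s s) ∧
        cov r s / Real.sqrt (cov r r * cov s s) ≤ 1 / (1 + κ0) := by
  classical
  intro f mean cov
  have hfin : ∀ (p : Finset (Finset (Fin n)) → Prop) (F : Finset (Finset (Fin n)) → ℝ),
      ∑ᶠ ρ ∈ {ρ | p ρ}, F ρ = ∑ ρ ∈ Finset.univ.filter p, F ρ := by
    intro p F
    rw [← finsum_mem_coe_finset]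
    simp
  set A := Finset.univ.filter (IsContigPartition n) with hA
  let F : Finset (Finset (Fin n)) → (Fin n → ℝ) → ℝ := fun ρ y =>
    ∏ S ∈ ρ, multivariateTDensity S.card (2 * α0) (fun _ => μ0)
          ((β0 / α0) • ((1 : Matrix (Fin S.card) (Fin S.card) ℝ) +
            κ0⁻¹ • Matrix.of fun _ _ => (1 : ℝ)))
          (fun i => y (S.orderEmbOfFin rfl i))
  have hf : ∀ y, f y = ∑ ρ ∈ A, w ρ * F ρ y := fun y => hfin _ _
  have hw : ∑ ρ ∈ A, w ρ = 1 := by rw [← hw1, hfin]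
  have hm := fun ρ (hρ : ρ ∈ A) => rho_mom n μ0 κ0 α0 β0 hκ hα hβ ρ
    (contig_part n ρ (Finset.mem_filter.1 hρ).2) (F ρ) rfl
  have hmul : ∀ (u : (Fin n → ℝ) → ℝ), (∀ ρ ∈ A, Integrable (fun y => u y * F ρ y)) →
      Integrable (fun y => u y * f y) ∧ ∫ y, u y * f y = ∑ ρ ∈ A, w ρ * ∫ y, u y * F ρ y := by
    intro u hu
    have he : (fun y => u y * f y) = fun y => ∑ ρ ∈ A, w ρ * (u y * F ρ y) := by
      ext y
      rw [hf, Finset.mul_sum]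
      exact Finset.sum_congr rfl fun _ _ => by ring
    rw [he]
    refine ⟨integrable_finsetSum _ fun ρ hρ => (hu ρ hρ).const_mul _, ?_⟩
    rw [integral_finsetSum _ fun ρ hρ => (hu ρ hρ).const_mul _]
    simp only [integral_const_mul]
  have h0 := hmul (fun _ => 1) (fun ρ hρ => by simpa using (hm ρ hρ).1.1)
  have h0v : ∫ y, f y = 1 := by
    have := h0.2
    simp only [one_mul] at this
    rw [this, ← hw]
    exact Finset.sum_congr rfl fun ρ hρ => by rw [(hm ρ hρ).1.2, mul_one]
  have hmean : ∀ i, mean i = μ0 := by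
    intro i
    have h1 := hmul (fun y => y i - μ0) (fun ρ hρ => ((hm ρ hρ).2.1 i).1)
    have h1v : ∫ y : Fin n → ℝ, (y i - μ0) * f y = 0 := by
      rw [h1.2]
      exact Finset.sum_eq_zero fun ρ hρ => by rw [((hm ρ hρ).2.1 i).2, mul_zero]
    have hi0 : Integrable f := by simpa using h0.1
    change ∫ y : Fin n → ℝ, y i * f y = μ0
    have : (fun y : Fin n → ℝ => y i * f y) = fun y => (y i - μ0) * f y + μ0 * f y := by
      ext y; ring
    rw [this, integral_add h1.1 (hi0.const_mul _), h1v, integral_const_mul, h0v]; ring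
  have hcov : ∀ i j, cov i j = ∑ ρ ∈ A, w ρ * if ∃ S ∈ ρ, i ∈ S ∧ j ∈ S then
      β0 / (α0 - 1) * ((if i = j then 1 else 0) + κ0⁻¹) else 0 := by
    intro i j
    change ∫ y : Fin n → ℝ, (y i - mean i) * (y j - mean j) * f y = _
    rw [hmean, hmean, (hmul (fun y => (y i - μ0) * (y j - μ0)) (fun ρ hρ => ((hm ρ hρ).2.2 i j).1)).2]
    exact Finset.sum_congr rfl fun ρ hρ => by rw [((hm ρ hρ).2.2 i j).2]
  have hvar : ∀ i, cov i i = β0 / (α0 - 1) * (1 + κ0⁻¹) := by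
    intro i
    rw [hcov]
    rw [Finset.sum_congr rfl (g := fun ρ => w ρ * (β0 / (α0 - 1) * (1 + κ0⁻¹)))]
    · rw [← Finset.sum_mul, hw, one_mul]
    · intro ρ hρ
      obtain ⟨S, hS, hi, _⟩ := contig_part n ρ (Finset.mem_filter.1 hρ).2 i
      rw [if_pos ⟨S, hS, hi, hi⟩, if_pos rfl]
  set P := ∑ᶠ ρ ∈ {ρ | IsContigPartition n ρ ∧ ∃ S ∈ ρ, r ∈ S ∧ s ∈ S}, w ρ with hP
  have hP' : P = ∑ ρ ∈ A, if ∃ S ∈ ρ, r ∈ S ∧ s ∈ S then w ρ else 0 := by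
    rw [hP, hfin, ← Finset.sum_filter, hA, Finset.filter_filter]
    exact Finset.sum_congr (by ext; simp) fun _ _ => rfl
  have hP0 : 0 ≤ P := by
    rw [hP']
    refine Finset.sum_nonneg fun ρ _ => ?_
    split_ifs
    · exact hw0 ρ
    · exact le_rfl
  have hP1 : P ≤ 1 := by
    rw [hP', ← hw]
    refine Finset.sum_le_sum fun ρ _ => ?_
    split_ifs
    · exact le_rfl
    · exact hw0 ρ
  have hcrs : cov r s = P * (β0 / (α0 - 1) * κ0⁻¹) := by
    rw [hcov, hP', Finset.sum_mul]
    refine Finset.sum_congr rfl fun ρ _ => ?_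
    rw [if_neg hrs]
    split_ifs <;> ring
  have ha1 : 0 < α0 - 1 := by linarith
  have hmain : cov r s / Real.sqrt (cov r r * cov s s) = P / (1 + κ0) := by
    rw [hvar, hvar, Real.sqrt_mul_self (by positivity), hcrs]
    field_simp
    ring
  rw [hmain]
  refine ⟨rfl, by positivity, ?_⟩
  gcongr
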